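/- arXiv:1908.08245 — 2 statements merged into one kernel-verified Lean document; each statement's English description precedes it below -/
import Mathlib

section
/- Let L̂ ∈ ℝ^{N×N} be the Laplacian L̂ = D − Â of a symmetric matrix Â = [â_{ij}] with â_{ij} ≥ 0 (D = diag of row sums of Â) whose associated undirected graph (edge {i,j} whenever â_{ij} > 0) is connected. Let B_1,…,B_N ∈ ℝ^{n×n} be symmetric positive semidefinite matrices such that Σ_{i=1}^N B_i is positive definite. Then the Nn × Nn matrix L̂ ⊗ I_n + blockdiag(B_1,…,B_N) is positive definite, where ⊗ denotes the Kronecker product. -/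
open Matrix
open scoped Kronecker

/-- Laplacian matrix of a weighted adjacency matrix. -/
def lapl {N : ℕ} (A : Matrix (Fin N) (Fin N) ℝ) : Matrix (Fin N) (Fin N) ℝ :=
  Matrix.diagonal (fun i => ∑ j, A i j) - A

/-!
A sum of two positive semidefinite matrices is positive definite as soon as their kernels meet only
in `0`. The Dirichlet form of `L̂` vanishes at `v` only if `v` is constant along edges, so
connectedness makes every vector in the kernel of `L̂ ⊗ I` consist of `N` copies of a single vector
`y`. If such a vector is also in the kernel of the block diagonal part, then `B_i y = 0` for every
`i`, hence `(∑ i, B_i) y = 0` and `y = 0`.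
-/

section Matrix

variable {l m n o R : Type*}

theorem blockDiagonal_mulVec_apply [Fintype n] [Fintype o] [DecidableEq o]
    [NonUnitalNonAssocSemiring R] (M : o → Matrix m n R) (x : n × o → R) (k : m) (i : o) :
    (blockDiagonal M *ᵥ x) (k, i) = (M i *ᵥ fun j ↦ x (j, i)) k := by
  simp [mulVec, dotProduct, blockDiagonal_apply, Fintype.sum_prod_type]

theorem kronecker_one_mulVec_apply [Fintype m] [Fintype n] [DecidableEq n] [NonAssocSemiring R]
    (A : Matrix l m R) (x : m × n → R) (i : l) (k : n) :
    ((A ⊗ₖ (1 : Matrix n n R)) *ᵥ x) (i, k) = (A *ᵥ fun j ↦ x (j, k)) i := by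
  simp [mulVec, dotProduct, one_apply, Fintype.sum_prod_type]

theorem posSemidef_blockDiagonal [Finite m] [Finite o] [DecidableEq o] [Ring R] [PartialOrder R]
    [StarRing R] [AddLeftMono R] {M : o → Matrix m m R} (hM : ∀ i, (M i).PosSemidef) :
    (blockDiagonal M).PosSemidef := by
  cases nonempty_fintype m
  cases nonempty_fintype o
  refine .of_dotProduct_mulVec_nonneg ?_ fun x ↦ ?_
  · rw [IsHermitian, blockDiagonal_conjTranspose]
    exact congrArg blockDiagonal (funext fun i ↦ (hM i).isHermitian)
  · simp only [dotProduct, Fintype.sum_prod_type_right, blockDiagonal_mulVec_apply]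
    exact Finset.sum_nonneg fun i _ ↦ (hM i).dotProduct_mulVec_nonneg fun k ↦ x (k, i)

end Matrix

/-- The Laplacian `D - A` of a weighted adjacency matrix `A` on an arbitrary finite vertex type,
where `D` is the diagonal matrix of row sums; `lapl` is the case of real weights on `Fin N`. -/
def weightedLaplacian {V R : Type*} [Fintype V] [DecidableEq V] [AddCommGroup R]
    (A : Matrix V V R) : Matrix V V R :=
  diagonal (fun i ↦ ∑ j, A i j) - A

section Laplacian

variable {V : Type*} [Fintype V] [DecidableEq V]

theorem weightedLaplacian_mulVec_apply {R : Type*} [NonUnitalNonAssocRing R]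
    (A : Matrix V V R) (v : V → R) (i : V) :
    (weightedLaplacian A *ᵥ v) i = ∑ j, A i j * (v i - v j) := by
  rw [weightedLaplacian, sub_mulVec, Pi.sub_apply, mulVec_diagonal, Finset.sum_mul]
  simp only [mulVec, dotProduct, mul_sub, Finset.sum_sub_distrib]

theorem two_mul_star_dotProduct_weightedLaplacian_mulVec {R : Type*} [CommRing R] [StarRing R]
    {A : Matrix V V R} (hA : A.IsSymm) (v : V → R) :
    2 * (star v ⬝ᵥ (weightedLaplacian A *ᵥ v)) =
      ∑ i, ∑ j, A i j * (star (v i - v j) * (v i - v j)) := by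
  have row_form : star v ⬝ᵥ (weightedLaplacian A *ᵥ v) =
      ∑ i, ∑ j, A i j * (star (v i) * (v i - v j)) := by
    simp only [dotProduct, weightedLaplacian_mulVec_apply, Pi.star_apply, Finset.mul_sum,
      mul_left_comm]
  have column_form : star v ⬝ᵥ (weightedLaplacian A *ᵥ v) =
      ∑ i, ∑ j, A i j * (star (v j) * (v j - v i)) := by
    rw [row_form, Finset.sum_comm]
    simp only [hA.apply]
  rw [two_mul]
  nth_rw 1 [row_form]
  rw [column_form]
  simp only [← Finset.sum_add_distrib, star_sub]
  exact Finset.sum_congr rfl fun i _ ↦ Finset.sum_congr rfl fun j _ ↦ by ring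

end Laplacian

section RCLike

open scoped ComplexOrder

variable {V m 𝕜 : Type*} [Fintype V] [DecidableEq V] [RCLike 𝕜]

theorem posDef_add_of_forall_mulVec_eq_zero [Fintype m] {P Q : Matrix m m 𝕜}
    (hP : P.PosSemidef) (hQ : Q.PosSemidef)
    (hker : ∀ x, P *ᵥ x = 0 → Q *ᵥ x = 0 → x = 0) : (P + Q).PosDef := by
  refine .of_dotProduct_mulVec_pos (hP.isHermitian.add hQ.isHermitian) fun x hx ↦ ?_
  have hPx := hP.dotProduct_mulVec_nonneg x
  have hQx := hQ.dotProduct_mulVec_nonneg x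
  rw [add_mulVec, dotProduct_add]
  refine (add_nonneg hPx hQx).lt_of_ne' fun hsum ↦ hx ?_
  obtain ⟨hPx₀, hQx₀⟩ := (add_eq_zero_iff_of_nonneg hPx hQx).mp hsum
  exact hker x ((hP.dotProduct_mulVec_zero_iff x).mp hPx₀)
    ((hQ.dotProduct_mulVec_zero_iff x).mp hQx₀)

-- `blockDiagonal` puts the block index in the second component and `⊗ₖ` here in the first, hence
-- the swap.
theorem posDef_kronecker_one_add_blockDiagonal [Finite m] [DecidableEq m] {L : Matrix V V 𝕜}
    (hL : L.PosSemidef) (hker : ∀ v, L *ᵥ v = 0 → ∀ i j, v i = v j) {B : V → Matrix m m 𝕜}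
    (hB : ∀ i, (B i).PosSemidef) (hBsum : (∑ i, B i).PosDef) :
    (L ⊗ₖ (1 : Matrix m m 𝕜) + (blockDiagonal B).submatrix Prod.swap Prod.swap).PosDef := by
  cases nonempty_fintype m
  refine posDef_add_of_forall_mulVec_eq_zero (hL.kronecker .one)
    ((posSemidef_blockDiagonal hB).submatrix Prod.swap) fun x hLx hBx ↦ ?_
  have slice_ker (k : m) : L *ᵥ (fun i ↦ x (i, k)) = 0 :=
    funext fun i ↦ (kronecker_one_mulVec_apply L x i k).symm.trans (congrFun hLx (i, k))
  have block_const (i j : V) (k : m) : x (i, k) = x (j, k) := hker _ (slice_ker k) i j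
  have block_ker (i : V) : B i *ᵥ (fun k ↦ x (i, k)) = 0 := by
    ext k
    have hxik := congrFun hBx (i, k)
    rw [show Prod.swap = Equiv.prodComm V m from rfl, submatrix_mulVec_equiv] at hxik
    exact (blockDiagonal_mulVec_apply B _ k i).symm.trans hxik
  ext ⟨i, k⟩
  have sum_ker : (∑ j, B j) *ᵥ (fun k ↦ x (i, k)) = 0 := by
    rw [sum_mulVec]
    exact Finset.sum_eq_zero fun j _ ↦ by
      simpa only [block_const i j] using block_ker j
  have block_zero : (fun k ↦ x (i, k)) = 0 := by
    by_contra hne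
    exact (hBsum.dotProduct_mulVec_pos hne).ne' (by rw [sum_ker, dotProduct_zero])
  exact congrFun block_zero k

theorem posSemidef_weightedLaplacian {A : Matrix V V 𝕜} (hA : A.IsSymm)
    (hA₀ : ∀ i j, 0 ≤ A i j) : (weightedLaplacian A).PosSemidef := by
  have hstar (i j : V) : star (A i j) = A i j := (IsSelfAdjoint.of_nonneg (hA₀ i j)).star_eq
  refine .of_dotProduct_mulVec_nonneg (.sub ?_ ?_) fun v ↦ ?_
  · exact isHermitian_diagonal_of_self_adjoint _ (funext fun i ↦ by simp [hstar])
  · exact .ext fun i j ↦ by rw [hstar, hA.apply]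
  · refine le_of_mul_le_mul_left ?_ (zero_lt_two' 𝕜)
    rw [mul_zero, two_mul_star_dotProduct_weightedLaplacian_mulVec hA]
    exact Finset.sum_nonneg fun i _ ↦ Finset.sum_nonneg fun j _ ↦
      mul_nonneg (hA₀ i j) (star_mul_self_nonneg _)

theorem eq_of_weightedLaplacian_mulVec_eq_zero_of_pos {A : Matrix V V 𝕜} (hA : A.IsSymm)
    (hA₀ : ∀ i j, 0 ≤ A i j) {v : V → 𝕜} (hv : weightedLaplacian A *ᵥ v = 0) {i j : V}
    (hij : 0 < A i j) : v i = v j := by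
  have energy_eq_zero : ∑ u, ∑ w, A u w * (star (v u - v w) * (v u - v w)) = 0 := by
    rw [← two_mul_star_dotProduct_weightedLaplacian_mulVec hA, hv, dotProduct_zero, mul_zero]
  have term_nonneg (u w : V) : 0 ≤ A u w * (star (v u - v w) * (v u - v w)) :=
    mul_nonneg (hA₀ u w) (star_mul_self_nonneg _)
  have row_eq_zero := congrFun ((Fintype.sum_eq_zero_iff_of_nonneg
    fun u ↦ Finset.sum_nonneg fun w _ ↦ term_nonneg u w).mp energy_eq_zero) i
  have term_eq_zero : A i j * (star (v i - v j) * (v i - v j)) = 0 :=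
    congrFun ((Fintype.sum_eq_zero_iff_of_nonneg (term_nonneg i)).mp row_eq_zero) j
  have sq_eq_zero := (mul_eq_zero.mp term_eq_zero).resolve_left hij.ne'
  exact sub_eq_zero.mp ((CStarRing.star_mul_self_eq_zero_iff _).mp sq_eq_zero)

theorem eq_of_weightedLaplacian_mulVec_eq_zero_of_reflTransGen {A : Matrix V V 𝕜}
    (hA : A.IsSymm) (hA₀ : ∀ i j, 0 ≤ A i j) {v : V → 𝕜} (hv : weightedLaplacian A *ᵥ v = 0)
    {i j : V} (hij : Relation.ReflTransGen (fun u w ↦ 0 < A u w) i j) : v i = v j := by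
  induction hij with
  | refl => rfl
  | tail _ huw ih =>
    exact ih.trans (eq_of_weightedLaplacian_mulVec_eq_zero_of_pos hA hA₀ hv huw)

theorem laplacian_plus_blockdiag_posDef_general [Finite m] [DecidableEq m]
    {A : Matrix V V 𝕜} (hA : A.IsSymm) (hA₀ : ∀ i j, 0 ≤ A i j)
    (hconn : ∀ i j, Relation.ReflTransGen (fun u w ↦ 0 < A u w) i j)
    {B : V → Matrix m m 𝕜} (hB : ∀ i, (B i).PosSemidef) (hBsum : (∑ i, B i).PosDef) :
    (weightedLaplacian A ⊗ₖ (1 : Matrix m m 𝕜) +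
      (blockDiagonal B).submatrix Prod.swap Prod.swap).PosDef :=
  posDef_kronecker_one_add_blockDiagonal (posSemidef_weightedLaplacian hA hA₀)
    (fun _ hv i j ↦
      eq_of_weightedLaplacian_mulVec_eq_zero_of_reflTransGen hA hA₀ hv (hconn i j)) hB hBsum

end RCLike

/-- **Positive definiteness of `L̂ ⊗ I_n + blockdiag(B_1,…,B_N)`.**
If `L̂` is the Laplacian of a symmetric nonnegative weighted adjacency matrix with
connected graph and the `B_i` are symmetric positive semidefinite with positive definite
sum, then `L̂ ⊗ I_n + blockdiag(B_1,…,B_N)` is positive definite. -/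
theorem laplacian_plus_blockdiag_posDef
    (N n : ℕ) (Ahat : Matrix (Fin N) (Fin N) ℝ)
    (hsymm : Ahatᵀ = Ahat)
    (hnonneg : ∀ i j, 0 ≤ Ahat i j)
    (hconn : ∀ i j : Fin N, Relation.ReflTransGen (fun u w => 0 < Ahat u w) i j)
    (B : Fin N → Matrix (Fin n) (Fin n) ℝ)
    (hBpsd : ∀ i, (B i).PosSemidef)
    (hBsum : (∑ i, B i).PosDef) :
    Matrix.PosDef
      ((lapl Ahat ⊗ₖ (1 : Matrix (Fin n) (Fin n) ℝ))
        + Matrix.of fun p q : Fin N × Fin n =>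
            if p.1 = q.1 then B p.1 p.2 q.2 else 0) :=
  laplacian_plus_blockdiag_posDef_general hsymm hnonneg hconn hBpsd hBsum
end

section
/- Fix integers M ≥ 1 and d ≥ 1 and a real number ε with 0 < ε < 1. Let C_1,…,C_d ∈ ℝ^{M×M} satisfy ‖C_i‖_∞ ≤ ε(ε − 1)/(ε − ε^{1−d}) for every i when d ≥ 2, and ‖C_1‖_∞ ≤ ε when d = 1, where ‖·‖_∞ is the matrix norm induced by the maximum (ℓ^∞) vector norm. Let C ∈ ℝ^{dM×dM} be the block companion matrix whose first block row is (C_1, C_2, …, C_d) and which has identity blocks I_M on the block subdiagonal and zero blocks elsewhere, and let Y = diag(I_M, εI_M, ε²I_M, …, ε^{d−1}I_M) (with Y = I_M when d = 1). Then ‖Y C Y⁻¹‖_∞ ≤ ε, and consequently ‖Y C Y⁻¹‖ ≤ ε√(dM), where ‖·‖ denotes the spectral (2-)norm. -/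
open Matrix

/-- Spectral (2-)norm of a real matrix. -/
noncomputable def specNorm {p q : Type*} [Fintype p] [Fintype q] [DecidableEq q]
    (A : Matrix p q ℝ) : ℝ :=
  ‖LinearMap.toContinuousLinearMap (Matrix.toEuclideanLin A)‖

/-- The matrix norm induced by the maximum (ℓ^∞) vector norm: the maximum absolute
row sum. -/
noncomputable def linftyNorm {p q : Type*} [Fintype p] [Fintype q]
    (A : Matrix p q ℝ) : ℝ :=
  ⨆ i, ∑ j, |A i j|

/-- The block companion matrix with first block row `(C_1, …, C_d)`, identity blocks on
the block subdiagonal and zero blocks elsewhere. -/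
def companion {M d : ℕ} (C : Fin d → Matrix (Fin M) (Fin M) ℝ) :
    Matrix (Fin d × Fin M) (Fin d × Fin M) ℝ :=
  Matrix.of fun r c =>
    if (r.1 : ℕ) = 0 then C c.1 r.2 c.2
    else if (r.1 : ℕ) = (c.1 : ℕ) + 1 then (if r.2 = c.2 then 1 else 0) else 0

/-! Conjugation by `Y` multiplies the `k`-th block of the first block row by `ε^{-k}` and every
subdiagonal identity block by `ε`. So the row sums of `Y C Y⁻¹` are at most
`max (∑ k, ‖C_k‖_∞ ε^{-k}) ε`, and the assumed bound on the blocks is exactly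
`ε / ∑ k, ε^{-k}`. -/

theorem sum_inv_pow_eq_div {K : Type*} [Field K] {x : K} (hx0 : x ≠ 0) (hx1 : x ≠ 1) (d : ℕ) :
    ∑ k : Fin d, (x ^ (k : ℕ))⁻¹ = (x - x ^ ((1 : ℤ) - d)) / (x - 1) := by
  simp only [← inv_pow]
  rw [Fin.sum_univ_eq_sum_range (fun k => x⁻¹ ^ k), geom_sum_inv hx1 hx0, zpow_sub₀ hx0, zpow_one,
    zpow_natCast, inv_pow, inv_mul_eq_div, inv_mul_eq_div]

theorem sum_mul_le_of_le_div_sum {ι K : Type*} [Field K] [LinearOrder K] [IsStrictOrderedRing K]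
    {s : Finset ι} {f w : ι → K} {c : K} (hc : 0 ≤ c) (hw : ∀ i ∈ s, 0 ≤ w i)
    (hf : ∀ i ∈ s, f i ≤ c / ∑ j ∈ s, w j) : ∑ i ∈ s, f i * w i ≤ c :=
  calc ∑ i ∈ s, f i * w i
      ≤ ∑ i ∈ s, c / (∑ j ∈ s, w j) * w i :=
        Finset.sum_le_sum fun i hi => mul_le_mul_of_nonneg_right (hf i hi) (hw i hi)
    _ = c / (∑ j ∈ s, w j) * ∑ j ∈ s, w j := (Finset.mul_sum _ _ _).symm
    _ ≤ c := by
        rw [div_mul_eq_mul_div, mul_div_assoc]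
        exact mul_le_of_le_one_right hc (div_self_le_one _)

theorem sum_mul_inv_pow_le {K : Type*} [Field K] [LinearOrder K] [IsStrictOrderedRing K]
    {x : K} (hx0 : 0 < x) (hx1 : x ≠ 1) {d : ℕ} {f : Fin d → K}
    (hf : ∀ k, f k ≤ x * (x - 1) / (x - x ^ ((1 : ℤ) - d))) :
    ∑ k, f k * (x ^ (k : ℕ))⁻¹ ≤ x := by
  refine sum_mul_le_of_le_div_sum hx0.le (fun k _ => by positivity) fun k _ => ?_
  rw [sum_inv_pow_eq_div hx0.ne' hx1, div_div_eq_mul_div]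
  exact hf k

section MatrixNorms

variable {p q : Type*} [Fintype p] [Fintype q]

theorem sum_abs_le_linftyNorm (A : Matrix p q ℝ) (i : p) : ∑ j, |A i j| ≤ linftyNorm A :=
  le_ciSup (f := fun i => ∑ j, |A i j|) (Set.finite_range _).bddAbove i

theorem linftyNorm_le {A : Matrix p q ℝ} {a : ℝ} (ha : 0 ≤ a) (hA : ∀ i, ∑ j, |A i j| ≤ a) :
    linftyNorm A ≤ a :=
  Real.iSup_le hA ha

theorem linftyNorm_nonneg (A : Matrix p q ℝ) : 0 ≤ linftyNorm A :=
  Real.iSup_nonneg fun i => Finset.sum_nonneg fun j _ => abs_nonneg (A i j)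

open scoped Matrix.Norms.Operator in
theorem norm_eq_linftyNorm (A : Matrix p q ℝ) : ‖A‖ = linftyNorm A := by
  have sum_nnnorm (i : p) : ((∑ j, ‖A i j‖₊ : NNReal) : ℝ) = ∑ j, |A i j| := by
    simp only [NNReal.coe_sum, coe_nnnorm, Real.norm_eq_abs]
  rw [Matrix.linfty_opNorm_def]
  apply le_antisymm
  · lift linftyNorm A to NNReal using linftyNorm_nonneg A with a ha
    refine NNReal.coe_le_coe.mpr (Finset.sup_le fun i _ => ?_)
    rw [← NNReal.coe_le_coe, sum_nnnorm, ha]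
    exact sum_abs_le_linftyNorm A i
  · refine linftyNorm_le NNReal.zero_le_coe fun i => ?_
    rw [← sum_nnnorm, NNReal.coe_le_coe]
    exact Finset.le_sup (f := fun i => ∑ j, ‖A i j‖₊) (Finset.mem_univ i)

open scoped Matrix.Norms.Operator in
theorem norm_mulVec_le_linftyNorm_mul (A : Matrix p q ℝ) (v : q → ℝ) :
    ‖A *ᵥ v‖ ≤ linftyNorm A * ‖v‖ :=
  norm_eq_linftyNorm A ▸ Matrix.linfty_opNorm_mulVec A v

theorem norm_toLp_two_le (v : p → ℝ) :
    ‖WithLp.toLp 2 v‖ ≤ Real.sqrt (Fintype.card p) * ‖v‖ := by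
  simpa [Real.sqrt_eq_rpow] using
    (PiLp.lipschitzWith_toLp 2 fun _ : p => ℝ).norm_le_mul (WithLp.toLp_zero 2) v

theorem norm_ofLp_two_le (x : EuclideanSpace ℝ q) : ‖WithLp.ofLp x‖ ≤ ‖x‖ := by
  simpa using (PiLp.lipschitzWith_ofLp 2 fun _ : q => ℝ).norm_le_mul (WithLp.ofLp_zero 2) x

theorem specNorm_le_linftyNorm_mul_sqrt_card [DecidableEq q] (A : Matrix p q ℝ) :
    specNorm A ≤ linftyNorm A * Real.sqrt (Fintype.card p) := by
  have hA := linftyNorm_nonneg A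
  refine ContinuousLinearMap.opNorm_le_bound _ (by positivity) fun x => ?_
  calc ‖WithLp.toLp 2 (A *ᵥ x.ofLp)‖
      ≤ Real.sqrt (Fintype.card p) * ‖A *ᵥ x.ofLp‖ := norm_toLp_two_le _
    _ ≤ Real.sqrt (Fintype.card p) * (linftyNorm A * ‖x‖) := by
        gcongr
        exact (norm_mulVec_le_linftyNorm_mul A _).trans (by gcongr; exact norm_ofLp_two_le x)
    _ = linftyNorm A * Real.sqrt (Fintype.card p) * ‖x‖ := by ring

end MatrixNorms

theorem diagonal_mul_mul_diagonal_inv_apply {n K : Type*} [Fintype n] [DecidableEq n] [Field K]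
    {v : n → K} (hv : ∀ i, v i ≠ 0) (A : Matrix n n K) (i j : n) :
    (diagonal v * A * (diagonal v)⁻¹) i j = v i * A i j * (v j)⁻¹ := by
  have diagonal_inv : (diagonal v)⁻¹ = diagonal fun k => (v k)⁻¹ := by
    refine inv_eq_right_inv ?_
    simp only [diagonal_mul_diagonal, mul_inv_cancel₀ (hv _), diagonal_one]
  rw [diagonal_inv, mul_diagonal, diagonal_mul]

section Companion

variable {M d : ℕ} (C : Fin d → Matrix (Fin M) (Fin M) ℝ)

theorem companion_row_zero {r : Fin d} (hr : (r : ℕ) = 0) (m : Fin M) (c : Fin d × Fin M) :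
    companion C (r, m) c = C c.1 m c.2 :=
  if_pos hr

theorem companion_row_succ {r s : Fin d} (hrs : (r : ℕ) = s + 1) (m : Fin M) :
    companion C (r, m) = Pi.single (s, m) 1 := by
  ext ⟨k, j⟩
  simp only [companion, of_apply, hrs, Nat.add_eq_zero_iff, one_ne_zero, and_false, if_false,
    Nat.add_right_cancel_iff, ← Fin.ext_iff, Pi.single_apply, Prod.mk.injEq, ← ite_and,
    eq_comm (a := s), eq_comm (a := m)]

/-- The block diagonal matrix `Y = diag(I, εI, …, ε^{d-1}I)` with blocks of size `M`, indexed like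
`companion` by pairs (block, position inside the block). -/
def blockScaling (M d : ℕ) (ε : ℝ) : Matrix (Fin d × Fin M) (Fin d × Fin M) ℝ :=
  diagonal fun r => ε ^ (r.1 : ℕ)

variable {ε : ℝ}

theorem blockScaling_conj_apply (hε : ε ≠ 0) (A : Matrix (Fin d × Fin M) (Fin d × Fin M) ℝ)
    (r c : Fin d × Fin M) :
    (blockScaling M d ε * A * (blockScaling M d ε)⁻¹) r c
      = ε ^ (r.1 : ℕ) * A r c * (ε ^ (c.1 : ℕ))⁻¹ :=
  diagonal_mul_mul_diagonal_inv_apply (fun _ => pow_ne_zero _ hε) A r c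

theorem sum_abs_blockScaling_conj_companion_row_zero (hε : 0 < ε) {r : Fin d}
    (hr : (r : ℕ) = 0) (m : Fin M) :
    ∑ c, |(blockScaling M d ε * companion C * (blockScaling M d ε)⁻¹) (r, m) c|
      = ∑ k, (∑ j, |C k m j|) * (ε ^ (k : ℕ))⁻¹ := by
  have abs_inv_pow (k : ℕ) : |(ε ^ k)⁻¹| = (ε ^ k)⁻¹ := abs_of_pos (by positivity)
  simp only [blockScaling_conj_apply hε.ne', companion_row_zero C hr, hr, pow_zero, one_mul,
    abs_mul, abs_inv_pow, Fintype.sum_prod_type, Finset.sum_mul]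

theorem sum_abs_blockScaling_conj_companion_row_succ (hε : 0 < ε) {r s : Fin d}
    (hrs : (r : ℕ) = s + 1) (m : Fin M) :
    ∑ c, |(blockScaling M d ε * companion C * (blockScaling M d ε)⁻¹) (r, m) c| = ε := by
  simp only [blockScaling_conj_apply hε.ne', companion_row_succ C hrs]
  rw [Fintype.sum_eq_single (s, m) fun c hc => by simp [hc]]
  rw [Pi.single_eq_same, mul_one, hrs, pow_succ', mul_inv_cancel_right₀ (pow_ne_zero _ hε.ne'),
    abs_of_pos hε]

theorem linftyNorm_blockScaling_conj_companion_le (hε : 0 < ε) :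
    linftyNorm (blockScaling M d ε * companion C * (blockScaling M d ε)⁻¹)
      ≤ max (∑ k, linftyNorm (C k) * (ε ^ (k : ℕ))⁻¹) ε := by
  refine linftyNorm_le (hε.le.trans (le_max_right _ _)) fun ⟨r, m⟩ => ?_
  rcases Nat.eq_zero_or_eq_succ_pred (r : ℕ) with hr | hr
  · rw [sum_abs_blockScaling_conj_companion_row_zero C hε hr]
    refine le_max_of_le_left (Finset.sum_le_sum fun k _ => ?_)
    gcongr
    exact sum_abs_le_linftyNorm (C k) m
  · have pred_lt : (r : ℕ).pred < d := (Nat.pred_le _).trans_lt r.isLt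
    rw [sum_abs_blockScaling_conj_companion_row_succ C hε (s := ⟨_, pred_lt⟩) hr]
    exact le_max_right _ _

theorem companion_scaling_norm_bound_general (hε : 0 < ε)
    (hC : ∑ k, linftyNorm (C k) * (ε ^ (k : ℕ))⁻¹ ≤ ε) :
    linftyNorm (blockScaling M d ε * companion C * (blockScaling M d ε)⁻¹) ≤ ε ∧
    specNorm (blockScaling M d ε * companion C * (blockScaling M d ε)⁻¹)
      ≤ ε * Real.sqrt (d * M) := by
  have linftyNorm_le_ε :
      linftyNorm (blockScaling M d ε * companion C * (blockScaling M d ε)⁻¹) ≤ ε :=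
    (linftyNorm_blockScaling_conj_companion_le C hε).trans (max_le hC le_rfl)
  refine ⟨linftyNorm_le_ε, (specNorm_le_linftyNorm_mul_sqrt_card _).trans ?_⟩
  rw [Fintype.card_prod, Fintype.card_fin, Fintype.card_fin, Nat.cast_mul]
  gcongr

end Companion

/-- **Scaling estimate for the block companion matrix.**
If `0 < ε < 1` and the blocks `C_i` satisfy `‖C_i‖_∞ ≤ ε(ε−1)/(ε−ε^{1−d})` (resp.
`‖C_1‖_∞ ≤ ε` when `d = 1`), then with `Y = diag(I, εI, …, ε^{d−1}I)` one has
`‖Y C Y⁻¹‖_∞ ≤ ε`, and consequently `‖Y C Y⁻¹‖ ≤ ε √(dM)` in the spectral norm. -/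
theorem companion_scaling_norm_bound
    (M d : ℕ) (hM : 1 ≤ M) (hd : 1 ≤ d)
    (ε : ℝ) (hε0 : 0 < ε) (hε1 : ε < 1)
    (C : Fin d → Matrix (Fin M) (Fin M) ℝ)
    (hC : 2 ≤ d → ∀ i, linftyNorm (C i) ≤ ε * (ε - 1) / (ε - ε ^ ((1:ℤ) - d)))
    (hC1 : d = 1 → ∀ i, linftyNorm (C i) ≤ ε) :
    linftyNorm ((Matrix.diagonal (fun r : Fin d × Fin M => ε ^ (r.1 : ℕ))) * companion C *
        (Matrix.diagonal (fun r : Fin d × Fin M => ε ^ (r.1 : ℕ)))⁻¹) ≤ ε ∧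
    specNorm ((Matrix.diagonal (fun r : Fin d × Fin M => ε ^ (r.1 : ℕ))) * companion C *
        (Matrix.diagonal (fun r : Fin d × Fin M => ε ^ (r.1 : ℕ)))⁻¹)
      ≤ ε * Real.sqrt (d * M) := by
  refine companion_scaling_norm_bound_general C hε0 ?_
  rcases hd.eq_or_lt with rfl | hd2
  · simpa using hC1 rfl 0
  · exact sum_mul_inv_pow_le hε0 hε1.ne (hC hd2)
end
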